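/- Let F be the set of f ∈ C¹([-1,1]) with f(±1) = ±1, f'(±1) > 0, f(y) ∈ (-1,1) for y ∈ (-1,1), and f(-y) = -f(y). For f ∈ F define F(y) = ∫_{-1}^{y} f'(s)·s ds, I₁(f) = ∫₀¹ F(y)²/(1 - f(y)²) dy and I₂(f) = ∫₀¹ (1 - f(y))·y dy. Then for every f ∈ F with f ≠ id, the strict inequality 6·I₂(f)³ < I₁(f)² holds, with equality when f = id. -/

import Mathlib

open MeasureTheory Set Filter Topology

theorem parts_aux (f f' : ℝ → ℝ) (hd : ∀ y, HasDerivAt f (f' y) y) (hc : Continuous f')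
    (hm1 : f (-1) = -1) (y : ℝ) :
    (∫ s in (-1 : ℝ)..y, f' s * s) = y * f y - 1 - ∫ s in (-1 : ℝ)..y, f s := by
  have hfc : Continuous f := continuous_iff_continuousAt.2 fun y => (hd y).continuousAt
  have h := intervalIntegral.integral_eq_sub_of_hasDerivAt (a := -1) (b := y)
    (f := fun s => s * f s) (f' := fun s => f s + f' s * s)
    (fun s _ => by
      have := (hasDerivAt_id s).mul (hd s)
      refine this.congr_deriv ?_
      simp; ring)
    ((hfc.add (hc.mul continuous_id)).intervalIntegrable _ _)
  rw [intervalIntegral.integral_add (hfc.intervalIntegrable _ _)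
    (Continuous.intervalIntegrable (by fun_prop) _ _)] at h
  simp only [hm1] at h
  linarith

theorem key_aux (f : ℝ → ℝ) (hfc : Continuous f)
    (h1 : f 1 = 1)
    (hlt : ∀ y ∈ Set.Ico (0 : ℝ) 1, f y ∈ Set.Ioo (-1 : ℝ) 1)
    (hne : ¬ ∀ y ∈ Set.Icc (0 : ℝ) 1, f y = y) :
    0 < (∫ y in (0 : ℝ)..1, (1 - f y ^ 2)) ∧
    3 / 8 * (∫ y in (0 : ℝ)..1, (1 - f y ^ 2)) ^ 2 < ∫ y in (0 : ℝ)..1, (1 - f y) * y := by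
  have hJc : Continuous fun y => 1 - f y ^ 2 := by fun_prop
  have hle : ∀ y ∈ Set.Icc (0 : ℝ) 1, -1 ≤ f y ∧ f y ≤ 1 := by
    intro y hy
    rcases hy.2.eq_or_lt with h | h
    · rw [h, h1]; norm_num
    · exact ⟨(hlt y ⟨hy.1, h⟩).1.le, (hlt y ⟨hy.1, h⟩).2.le⟩
  have hJ : 0 < ∫ y in (0 : ℝ)..1, (1 - f y ^ 2) := by
    apply intervalIntegral.intervalIntegral_pos_of_pos_on (hJc.intervalIntegrable _ _) _ one_pos
    intro y hy
    have := hlt y ⟨hy.1.le, hy.2⟩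
    nlinarith [this.1, this.2]
  refine ⟨hJ, ?_⟩
  set J := ∫ y in (0 : ℝ)..1, (1 - f y ^ 2) with hJdef
  set t := 3 / 2 * J with ht
  have htpos : 0 < t := by positivity
  let D : ℝ → ℝ := fun y => (1 - f y) * y - t / 2 * (1 - f y ^ 2) + (max (t - y) 0) ^ 2 / (2 * t)
  have hDc : Continuous D := by fun_prop
  have hDle : ∀ y, y ≤ t → D y = t / 2 * (f y - y / t) ^ 2 := by
    intro y hy
    simp only [D]
    rw [max_eq_left (by linarith)]
    field_simp
    ring
  have hD0 : ∀ y ∈ Set.Icc (0 : ℝ) 1, 0 ≤ D y := by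
    intro y hy
    rcases le_total y t with h | h
    · rw [hDle y h]; positivity
    · simp only [D]
      rw [max_eq_right (by linarith)]
      obtain ⟨ha, hb⟩ := hle y hy
      have : 0 ≤ (1 - f y) * (y - t / 2 * (1 + f y)) := by
        apply mul_nonneg (by linarith)
        nlinarith
      simp only [ne_eq, OfNat.ofNat_ne_zero, not_false_eq_true, zero_pow, zero_div, add_zero]
      nlinarith
  have hex : ∃ y ∈ Set.Icc (0 : ℝ) 1, 0 < D y := by
    by_contra hcon
    push Not at hcon
    have hz : ∀ y ∈ Set.Icc (0 : ℝ) 1, y ≤ t → f y = y / t := by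
      intro y hy hyt
      have h2 := le_antisymm (hcon y hy) (hD0 y hy)
      rw [hDle y hyt] at h2
      have h3 : (f y - y / t) ^ 2 = 0 := by
        rcases mul_eq_zero.1 h2 with h | h
        · linarith
        · exact h
      have := pow_eq_zero_iff (two_ne_zero) |>.1 h3
      linarith
    rcases lt_or_ge t 1 with h | h
    · have h2 := hz t ⟨htpos.le, h.le⟩ le_rfl
      rw [div_self htpos.ne'] at h2
      have := (hlt t ⟨htpos.le, h⟩).2
      linarith
    · have h2 := hz 1 ⟨zero_le_one, le_rfl⟩ h
      rw [h1] at h2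
      have ht1 : t = 1 := by field_simp at h2; linarith
      apply hne
      intro y hy
      have := hz y hy (by linarith [hy.2])
      rw [this, ht1, div_one]
  have hDpos : 0 < ∫ y in (0 : ℝ)..1, D y := by
    obtain ⟨c, hc, hcD⟩ := hex
    exact intervalIntegral.integral_pos one_pos hDc.continuousOn
      (fun y hy => hD0 y ⟨hy.1.le, hy.2⟩) ⟨c, hc, hcD⟩
  have hM : (∫ y in (0 : ℝ)..1, (max (t - y) 0) ^ 2) ≤ t ^ 3 / 3 := by
    have hcM : Continuous fun y : ℝ => (max (t - y) 0) ^ 2 := by fun_prop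
    have e1 : (∫ y in (0 : ℝ)..t, (max (t - y) 0) ^ 2) = t ^ 3 / 3 := by
      have : (∫ y in (0 : ℝ)..t, (max (t - y) 0) ^ 2) = ∫ y in (0 : ℝ)..t, (t - y) ^ 2 := by
        apply intervalIntegral.integral_congr
        intro y hy
        rw [uIcc_of_le htpos.le] at hy
        simp only
        rw [max_eq_left (by linarith [hy.2])]
      rw [this, intervalIntegral.integral_comp_sub_left (fun x => x ^ 2) t]
      simp
      norm_num
    have e3 : (∫ y in t..(max t 1), (max (t - y) 0) ^ 2) = 0 := by
      have : (∫ y in t..(max t 1), (max (t - y) 0) ^ 2) = ∫ y in t..(max t 1), (0:ℝ) := by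
        apply intervalIntegral.integral_congr
        intro y hy
        rw [uIcc_of_le (le_max_left _ _)] at hy
        simp only
        rw [max_eq_right (by linarith [hy.1])]
        norm_num
      rw [this]; simp
    have e2 : (∫ y in (0 : ℝ)..(max t 1), (max (t - y) 0) ^ 2) = t ^ 3 / 3 := by
      rw [← intervalIntegral.integral_add_adjacent_intervals (b := t)
        (hcM.intervalIntegrable _ _) (hcM.intervalIntegrable _ _), e1, e3, add_zero]
    rw [← e2, ← intervalIntegral.integral_add_adjacent_intervals (b := 1) (c := max t 1)
        (hcM.intervalIntegrable _ _) (hcM.intervalIntegrable _ _)]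
    have : 0 ≤ ∫ y in (1 : ℝ)..(max t 1), (max (t - y) 0) ^ 2 :=
      intervalIntegral.integral_nonneg (le_max_right _ _) fun y _ => by positivity
    linarith
  have hDint : (∫ y in (0 : ℝ)..1, D y) = (∫ y in (0 : ℝ)..1, (1 - f y) * y) - t / 2 * J
      + (∫ y in (0 : ℝ)..1, (max (t - y) 0) ^ 2) / (2 * t) := by
    simp only [D]
    rw [intervalIntegral.integral_add, intervalIntegral.integral_sub,
      intervalIntegral.integral_const_mul, intervalIntegral.integral_div]
    all_goals apply Continuous.intervalIntegrable; fun_prop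
  have hM2 : (∫ y in (0 : ℝ)..1, (max (t - y) 0) ^ 2) / (2 * t) ≤ t ^ 2 / 6 := by
    rw [div_le_iff₀ (by positivity)]
    nlinarith
  rw [hDint] at hDpos
  have : J = 2 / 3 * t := by rw [ht]; ring
  nlinarith

theorem core_aux (f f' : ℝ → ℝ) (hd : ∀ y, HasDerivAt f (f' y) y) (hc : Continuous f')
    (h1 : f 1 = 1) (hm1 : f (-1) = -1)
    (hd1 : 0 < f' 1)
    (hrange : ∀ y ∈ Set.Ioo (-1 : ℝ) 1, f y ∈ Set.Ioo (-1 : ℝ) 1)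
    (hodd : ∀ y ∈ Set.Icc (-1 : ℝ) 1, f (-y) = -f y) :
    (¬ (∀ y ∈ Set.Icc (-1 : ℝ) 1, f y = y) →
      6 * (∫ y in (0 : ℝ)..1, (1 - f y) * y) ^ 3 <
        (∫ y in (0 : ℝ)..1, (∫ s in (-1 : ℝ)..y, f' s * s) ^ 2 / (1 - (f y) ^ 2)) ^ 2) ∧
    ((∀ y ∈ Set.Icc (-1 : ℝ) 1, f y = y) →
      6 * (∫ y in (0 : ℝ)..1, (1 - f y) * y) ^ 3 =
        (∫ y in (0 : ℝ)..1, (∫ s in (-1 : ℝ)..y, f' s * s) ^ 2 / (1 - (f y) ^ 2)) ^ 2) := by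
  have hfc : Continuous f := continuous_iff_continuousAt.2 fun y => (hd y).continuousAt
  have hparts := parts_aux f f' hd hc hm1
  constructor
  · intro hne
    have hlt : ∀ y ∈ Set.Ico (0 : ℝ) 1, f y ∈ Set.Ioo (-1 : ℝ) 1 :=
      fun y hy => hrange y ⟨by linarith [hy.1], hy.2⟩
    obtain ⟨hJ, hkey⟩ := key_aux f hfc h1 hlt (by
      intro h
      apply hne
      intro y hy
      rcases le_total 0 y with h0 | h0
      · exact h y ⟨h0, hy.2⟩
      · have a := h (-y) ⟨by linarith, by linarith [hy.1]⟩
        rw [hodd y hy] at a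
        linarith)
    have hgc : Continuous fun s => f' s * s := hc.mul continuous_id
    set F : ℝ → ℝ := fun y => ∫ s in (-1 : ℝ)..y, f' s * s with hF
    have hFd : ∀ y, HasDerivAt F (f' y * y) y := fun y =>
      intervalIntegral.integral_hasDerivAt_right (hgc.intervalIntegrable _ _)
        (hgc.stronglyMeasurableAtFilter _ _) hgc.continuousAt
    have hFc : Continuous F := continuous_iff_continuousAt.2 fun y => (hFd y).continuousAt
    have hint0 : (∫ s in (-1 : ℝ)..1, f s) = 0 := by
      have e1 : (∫ s in (-1 : ℝ)..1, f (-s)) = ∫ s in (-1 : ℝ)..1, f s := by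
        rw [intervalIntegral.integral_comp_neg]; simp
      have e2 : (∫ s in (-1 : ℝ)..1, f (-s)) = ∫ s in (-1 : ℝ)..1, - f s := by
        apply intervalIntegral.integral_congr
        intro y hy
        rw [uIcc_of_le (by norm_num)] at hy
        exact hodd y hy
      rw [intervalIntegral.integral_neg] at e2
      linarith
    have hF1 : F 1 = 0 := by
      have := hparts 1
      rw [hint0, h1] at this
      simp only [hF]; linarith
    have hI2 : (∫ y in (0 : ℝ)..1, F y) = - 2 * ∫ y in (0 : ℝ)..1, (1 - f y) * y := by
      have h := intervalIntegral.integral_eq_sub_of_hasDerivAt (a := 0) (b := 1)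
        (f := fun y => (1 - f y) * y ^ 2 / 2 + y * F y / 2)
        (f' := fun y => (1 - f y) * y + F y / 2)
        (fun y _ => by
          have a := ((((hd y).const_sub 1).mul (hasDerivAt_pow 2 y)).div_const 2).add
            (((hasDerivAt_id y).mul (hFd y)).div_const 2)
          refine a.congr_deriv ?_
          simp; ring)
        (Continuous.intervalIntegrable (by fun_prop) _ _)
      rw [intervalIntegral.integral_add (Continuous.intervalIntegrable (by fun_prop) _ _)
        (Continuous.intervalIntegrable (by fun_prop) _ _), intervalIntegral.integral_div] at h
      simp only [h1, hF1] at h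
      norm_num at h
      linarith
    have hpos : ∀ y ∈ Set.Ico (0 : ℝ) 1, 0 < 1 - f y ^ 2 := by
      intro y hy
      have := hlt y hy
      nlinarith [this.1, this.2]
    have hQc : ContinuousOn (fun y => F y ^ 2 / (1 - f y ^ 2)) (Set.Icc 0 1) := by
      intro y hy
      rcases hy.2.eq_or_lt with h | h
      · subst h
        apply ContinuousAt.continuousWithinAt
        have s1 := hasDerivAt_iff_tendsto_slope.1 (hd 1)
        have s2 := hasDerivAt_iff_tendsto_slope.1 (hFd 1)
        have s3 : Tendsto f (𝓝[≠] 1) (𝓝 1) := by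
          have := hfc.tendsto 1
          rw [h1] at this
          exact this.mono_left nhdsWithin_le_nhds
        have s4 : Tendsto (fun y : ℝ => 1 - y) (𝓝[≠] 1) (𝓝 0) := by
          have : Tendsto (fun y : ℝ => 1 - y) (𝓝 1) (𝓝 (1 - 1)) :=
            (Continuous.tendsto (by fun_prop) _)
          rw [sub_self] at this
          exact this.mono_left nhdsWithin_le_nhds
        have s5 := ((s2.pow 2).mul s4).div (s1.mul (s3.const_add 1))
          (by positivity)
        rw [mul_zero, zero_div] at s5
        rw [continuousAt_iff_punctured_nhds]
        simp only [hF1, h1]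
        norm_num
        refine s5.congr' ?_
        filter_upwards [self_mem_nhdsWithin] with y hy
        have hy' : y - 1 ≠ 0 := sub_ne_zero.2 hy
        have hy'' : 1 - y ≠ 0 := sub_ne_zero.2 (Ne.symm hy)
        simp only [slope_def_field, hF1, h1, Pi.div_apply, Pi.mul_apply, Pi.pow_apply]
        have e : (1 - f y ^ 2) = - ((f y - 1) * (1 + f y)) := by ring
        rw [e, div_pow, sub_zero]
        have e' : 1 - y = -(y - 1) := by ring
        rw [e', div_neg, div_mul_eq_mul_div, div_mul_eq_mul_div, div_div_eq_mul_div]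
        by_cases hz : (f y - 1) * (1 + f y) = 0
        · rw [hz]; simp
        · field_simp
      · apply ContinuousAt.continuousWithinAt
        exact (hFc.continuousAt.pow 2).div (by fun_prop) (hpos y ⟨hy.1, h⟩).ne'
    have hQi : IntervalIntegrable (fun y => F y ^ 2 / (1 - f y ^ 2)) volume 0 1 := by
      apply ContinuousOn.intervalIntegrable
      rwa [uIcc_of_le zero_le_one]
    set I1 := ∫ y in (0 : ℝ)..1, F y ^ 2 / (1 - f y ^ 2) with hI1
    set I2 := ∫ y in (0 : ℝ)..1, (1 - f y) * y with hI2'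
    set J := ∫ y in (0 : ℝ)..1, (1 - f y ^ 2) with hJ'
    have hCS : ∀ a : ℝ, 4 * a * I2 ≤ I1 + a ^ 2 * J := by
      intro a
      have h := intervalIntegral.integral_mono_on (a := 0) (b := 1) (μ := volume) zero_le_one
        (f := fun y => -2 * a * F y)
        (g := fun y => F y ^ 2 / (1 - f y ^ 2) + a ^ 2 * (1 - f y ^ 2))
        (Continuous.intervalIntegrable (by fun_prop) _ _)
        (hQi.add (Continuous.intervalIntegrable (by fun_prop) _ _))
        (fun y hy => by
          rcases hy.2.eq_or_lt with h | h
          · subst h; simp [hF1, h1]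
          · have hp := hpos y ⟨hy.1, h⟩
            have : F y ^ 2 / (1 - f y ^ 2) + a ^ 2 * (1 - f y ^ 2) - (-2 * a * F y)
                = (F y + a * (1 - f y ^ 2)) ^ 2 / (1 - f y ^ 2) := by
              field_simp
              ring
            have h2 : 0 ≤ (F y + a * (1 - f y ^ 2)) ^ 2 / (1 - f y ^ 2) := by positivity
            linarith)
      rw [intervalIntegral.integral_add hQi (Continuous.intervalIntegrable (by fun_prop) _ _),
        intervalIntegral.integral_const_mul, intervalIntegral.integral_const_mul, hI2] at h
      linarith
    have hI2p : 0 < I2 := lt_of_le_of_lt (by positivity) hkey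
    have hc1 := hCS (2 * I2 / J)
    have hc2 : 4 * I2 ^ 2 ≤ I1 * J := by
      have e : 4 * (2 * I2 / J) * I2 - (2 * I2 / J) ^ 2 * J = 4 * I2 ^ 2 / J := by
        field_simp
        ring
      have : 4 * I2 ^ 2 / J ≤ I1 := by linarith
      rwa [div_le_iff₀ hJ] at this
    have hI1p : 0 < I1 := by
      by_contra hcon
      push Not at hcon
      nlinarith [mul_nonneg (neg_nonneg.2 hcon) hJ.le, pow_pos hI2p 2]
    have h4 : (4 * I2 ^ 2) ^ 2 ≤ (I1 * J) ^ 2 := by gcongr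
    have h5 : I1 ^ 2 * (3 / 8 * J ^ 2) < I1 ^ 2 * I2 := by gcongr
    have h6 : 6 * I2 ^ 3 * I2 < I1 ^ 2 * I2 := by nlinarith
    exact lt_of_mul_lt_mul_right h6 hI2p.le
  · intro hid
    have e1 : (∫ y in (0 : ℝ)..1, (1 - f y) * y) = 1 / 6 := by
      have : (∫ y in (0 : ℝ)..1, (1 - f y) * y) = ∫ y in (0 : ℝ)..1, (y - y ^ 2) := by
        apply intervalIntegral.integral_congr
        intro y hy
        rw [uIcc_of_le zero_le_one] at hy
        simp only
        rw [hid y ⟨by linarith [hy.1], hy.2⟩]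
        ring
      rw [this, intervalIntegral.integral_sub (Continuous.intervalIntegrable (by fun_prop) _ _)
        (Continuous.intervalIntegrable (by fun_prop) _ _)]
      simp
      norm_num
    have e2 : (∫ y in (0 : ℝ)..1, (∫ s in (-1 : ℝ)..y, f' s * s) ^ 2 / (1 - (f y) ^ 2))
        = 1 / 6 := by
      have : (∫ y in (0 : ℝ)..1, (∫ s in (-1 : ℝ)..y, f' s * s) ^ 2 / (1 - (f y) ^ 2))
          = ∫ y in (0 : ℝ)..1, (1 / 4 - y ^ 2 / 4) := by
        apply intervalIntegral.integral_congr
        intro y hy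
        rw [uIcc_of_le zero_le_one] at hy
        simp only
        have e3 : (∫ s in (-1 : ℝ)..y, f s) = ∫ s in (-1 : ℝ)..y, s := by
          apply intervalIntegral.integral_congr
          intro s hs
          rw [uIcc_of_le (by linarith [hy.1])] at hs
          exact hid s ⟨hs.1, hs.2.trans hy.2⟩
        rw [hparts y, e3, integral_id, hid y ⟨by linarith [hy.1], hy.2⟩]
        rcases hy.2.eq_or_lt with h | h
        · subst h; norm_num
        · have : 1 - y ^ 2 ≠ 0 := by nlinarith [hy.1]
          field_simp
          ring
      rw [this, intervalIntegral.integral_sub (Continuous.intervalIntegrable (by fun_prop) _ _)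
        (Continuous.intervalIntegrable (by fun_prop) _ _)]
      simp
      norm_num
    rw [e1, e2]
    norm_num


theorem stmt_9 (f f' : ℝ → ℝ)
    (hderiv : ∀ y ∈ Set.Icc (-1 : ℝ) 1, HasDerivWithinAt f (f' y) (Set.Icc (-1 : ℝ) 1) y)
    (hcont : ContinuousOn f' (Set.Icc (-1 : ℝ) 1))
    (h1 : f 1 = 1) (hm1 : f (-1) = -1)
    (hd1 : 0 < f' 1) (hdm1 : 0 < f' (-1))
    (hrange : ∀ y ∈ Set.Ioo (-1 : ℝ) 1, f y ∈ Set.Ioo (-1 : ℝ) 1)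
    (hodd : ∀ y ∈ Set.Icc (-1 : ℝ) 1, f (-y) = -f y) :
    (¬ (∀ y ∈ Set.Icc (-1 : ℝ) 1, f y = y) →
      6 * (∫ y in (0 : ℝ)..1, (1 - f y) * y) ^ 3 <
        (∫ y in (0 : ℝ)..1, (∫ s in (-1 : ℝ)..y, f' s * s) ^ 2 / (1 - (f y) ^ 2)) ^ 2) ∧
    ((∀ y ∈ Set.Icc (-1 : ℝ) 1, f y = y) →
      6 * (∫ y in (0 : ℝ)..1, (1 - f y) * y) ^ 3 =
        (∫ y in (0 : ℝ)..1, (∫ s in (-1 : ℝ)..y, f' s * s) ^ 2 / (1 - (f y) ^ 2)) ^ 2) := by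
  have h11 : (-1 : ℝ) ≤ 1 := by norm_num
  let g : ℝ → ℝ := Set.IccExtend h11 (Set.restrict (Set.Icc (-1) 1) f')
  have hg : Continuous g := (continuousOn_iff_continuous_restrict.1 hcont).Icc_extend'
  have hge : ∀ y ∈ Set.Icc (-1 : ℝ) 1, g y = f' y := by
    intro y hy
    simp only [g]
    rw [Set.IccExtend_of_mem _ _ hy]
    rfl
  let φ : ℝ → ℝ := fun y => -1 + ∫ s in (-1 : ℝ)..y, g s
  have hφd : ∀ y, HasDerivAt φ (g y) y := fun y =>
    (intervalIntegral.integral_hasDerivAt_right (hg.intervalIntegrable _ _)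
      (hg.stronglyMeasurableAtFilter _ _) hg.continuousAt).const_add _
  have hφ : ∀ y ∈ Set.Icc (-1 : ℝ) 1, φ y = f y := by
    intro y hy
    have hsub : Set.Icc (-1 : ℝ) y ⊆ Set.Icc (-1) 1 := Set.Icc_subset_Icc_right hy.2
    have h := intervalIntegral.integral_eq_sub_of_hasDerivAt_of_le (f := f) (f' := g) hy.1
      (fun x hx => ((hderiv x (hsub hx)).continuousWithinAt).mono hsub)
      (fun x hx => by
        have hx' : x ∈ Set.Ioo (-1 : ℝ) 1 := ⟨hx.1, hx.2.trans_le hy.2⟩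
        rw [hge x ⟨hx'.1.le, hx'.2.le⟩]
        exact (hderiv x ⟨hx'.1.le, hx'.2.le⟩).hasDerivAt (Icc_mem_nhds hx'.1 hx'.2))
      (hg.intervalIntegrable _ _)
    simp only [φ]
    rw [h, hm1]; ring
  have m1 : (1 : ℝ) ∈ Set.Icc (-1 : ℝ) 1 := ⟨h11, le_rfl⟩
  have mm1 : (-1 : ℝ) ∈ Set.Icc (-1 : ℝ) 1 := ⟨le_rfl, h11⟩
  have core := core_aux φ g hφd hg (by rw [hφ 1 m1, h1]) (by rw [hφ _ mm1, hm1])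
    (by rw [hge 1 m1]; exact hd1)
    (fun y hy => by rw [hφ y ⟨hy.1.le, hy.2.le⟩]; exact hrange y hy)
    (fun y hy => by
      rw [hφ y hy, hφ (-y) ⟨by linarith [hy.2], by linarith [hy.1]⟩]; exact hodd y hy)
  have c1 : (∫ y in (0 : ℝ)..1, (1 - φ y) * y) = ∫ y in (0 : ℝ)..1, (1 - f y) * y := by
    apply intervalIntegral.integral_congr
    intro y hy
    rw [Set.uIcc_of_le zero_le_one] at hy
    simp only
    rw [hφ y ⟨by linarith [hy.1], hy.2⟩]
  have c2 : (∫ y in (0 : ℝ)..1, (∫ s in (-1 : ℝ)..y, g s * s) ^ 2 / (1 - (φ y) ^ 2))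
      = ∫ y in (0 : ℝ)..1, (∫ s in (-1 : ℝ)..y, f' s * s) ^ 2 / (1 - (f y) ^ 2) := by
    apply intervalIntegral.integral_congr
    intro y hy
    rw [Set.uIcc_of_le zero_le_one] at hy
    simp only
    have e : (∫ s in (-1 : ℝ)..y, g s * s) = ∫ s in (-1 : ℝ)..y, f' s * s := by
      apply intervalIntegral.integral_congr
      intro s hs
      rw [Set.uIcc_of_le (by linarith [hy.1])] at hs
      simp only
      rw [hge s ⟨hs.1, hs.2.trans hy.2⟩]
    rw [hφ y ⟨by linarith [hy.1], hy.2⟩, e]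
  rw [c1, c2] at core
  have c3 : (∀ y ∈ Set.Icc (-1 : ℝ) 1, φ y = y) ↔ (∀ y ∈ Set.Icc (-1 : ℝ) 1, f y = y) := by
    constructor
    · intro h y hy
      rw [← hφ y hy]; exact h y hy
    · intro h y hy
      rw [hφ y hy]; exact h y hy
  rw [c3] at core
  exact core
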